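/- Let FS_1 be the free shelf on one generator, let n ≥ 2, and let ρ : B_n^+ → End((FS_1)^n) be the monoid homomorphism given by ρ(σ_i)(a_1,…,a_n) = (a_1,…,a_{i−1}, a_{i+1}, a_i◁a_{i+1}, a_{i+2},…,a_n). Then the corresponding action of B_n^+ on (FS_1)^n is free: for all α, β ∈ B_n^+, if there exists a tuple a ∈ (FS_1)^n with ρ(α)(a) = ρ(β)(a), then α = β. -/

import Mathlib

/-- `T_i(a) = (…, a_{i+1}, a_i ◁ a_{i+1}, …)` on `S^{m+1}`. -/
def braidMap {S : Type*} (op : S → S → S) {m : ℕ} (i : Fin m) (a : Fin (m + 1) → S) :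
    Fin (m + 1) → S :=
  Function.update (Function.update a i.castSucc (a i.succ)) i.succ
    (op (a i.castSucc) (a i.succ))

/-- The defining relations of the positive braid monoid `B_{m+1}^+`. -/
def braidRels (m : ℕ) : FreeMonoid (Fin m) → FreeMonoid (Fin m) → Prop := fun a b =>
  (∃ i j : Fin m, (i : ℕ) + 2 ≤ (j : ℕ) ∧
      a = FreeMonoid.of i * FreeMonoid.of j ∧ b = FreeMonoid.of j * FreeMonoid.of i) ∨
  (∃ i j : Fin m, (i : ℕ) + 1 = (j : ℕ) ∧
      a = FreeMonoid.of i * FreeMonoid.of j * FreeMonoid.of i ∧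
      b = FreeMonoid.of j * FreeMonoid.of i * FreeMonoid.of j)

/-- The self-distributivity relation on a free magma. -/
def sdRel (α : Type*) : FreeMagma α → FreeMagma α → Prop := fun a b =>
  ∃ t u v : FreeMagma α, a = t * u * v ∧ b = (t * v) * (u * v)

/-- The free shelf on `α`; `FreeShelf Unit` is the free shelf on one generator. -/
abbrev FreeShelf (α : Type*) := (conGen (sdRel α)).Quotient

/-!
Reading a tuple `a` over a group `G` with a "shift" endomorphism as the single element
`Φ(a) = ⋯ sh (sh a_{m-2}) * sh a_{m-1} * a_m` turns the action of `σ_i` for Dehornoy's shelf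
`a ▷ b = (sh b)⁻¹ * σ₀ * sh a * b` on the braid group `B_∞` into left multiplication by a standard
generator. Since `B_n^+` embeds in `B_∞`, cancelling `Φ(a)` shows that the action of `B_n^+` on
tuples of braids is free, and freeness pulls back along any shelf homomorphism into `B_∞`. The
embedding is Garside's theorem: `B_∞^+` is cancellative because `σ_i x = σ_k y` forces both sides
to be multiples of the least common multiple of `σ_i` and `σ_k`, and it has common left multiples
because the half twists are quasi-central, so Ore's theorem applies.
-/

theorem presentedMonoid_induction {α : Type*} {rels : FreeMonoid α → FreeMonoid α → Prop}
    {p : PresentedMonoid rels → Prop} (one : p 1) (of : ∀ i, p (PresentedMonoid.of rels i))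
    (mul : ∀ x y, p x → p y → p (x * y)) (x : PresentedMonoid rels) : p x :=
  Submonoid.dense_induction _ (PresentedMonoid.closure_range_of rels) (Set.forall_mem_range.2 of)
    one mul x

/-! ### Artin monoids -/

/-- The relations of the simply laced Artin monoid of a graph: adjacent generators satisfy the
braid relation, all others commute. The case `i = j` of the commutation relation is harmless. -/
def artinRels {ι : Type*} (Γ : SimpleGraph ι) : FreeMonoid ι → FreeMonoid ι → Prop := fun a b =>
  (∃ i j, ¬ Γ.Adj i j ∧
      a = FreeMonoid.of i * FreeMonoid.of j ∧ b = FreeMonoid.of j * FreeMonoid.of i) ∨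
  (∃ i j, Γ.Adj i j ∧
      a = FreeMonoid.of i * FreeMonoid.of j * FreeMonoid.of i ∧
      b = FreeMonoid.of j * FreeMonoid.of i * FreeMonoid.of j)

/-- The simply laced Artin monoid of a graph; `ArtinMonoid (SimpleGraph.hasse ℕ)` is the positive
braid monoid on infinitely many strands. -/
abbrev ArtinMonoid {ι : Type*} (Γ : SimpleGraph ι) := PresentedMonoid (artinRels Γ)

namespace ArtinMonoid

variable {ι : Type*} {Γ : SimpleGraph ι} {i j k p : ι}

/-- The standard generators of an Artin monoid. -/
def gen (i : ι) : ArtinMonoid Γ := PresentedMonoid.of (artinRels Γ) i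

theorem commute_gen (h : ¬ Γ.Adj i j) : Commute (gen i : ArtinMonoid Γ) (gen j) :=
  PresentedMonoid.mk_eq_mk_of_rel (rels := artinRels Γ)
    (x := FreeMonoid.of i * FreeMonoid.of j) (y := FreeMonoid.of j * FreeMonoid.of i)
    (Or.inl ⟨i, j, h, rfl, rfl⟩)

theorem gen_braid (h : Γ.Adj i j) :
    (gen i * gen j * gen i : ArtinMonoid Γ) = gen j * gen i * gen j :=
  PresentedMonoid.mk_eq_mk_of_rel (rels := artinRels Γ)
    (x := FreeMonoid.of i * FreeMonoid.of j * FreeMonoid.of i)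
    (y := FreeMonoid.of j * FreeMonoid.of i * FreeMonoid.of j)
    (Or.inr ⟨i, j, h, rfl, rfl⟩)

theorem gen_mul_gen_mul_comm (h : ¬ Γ.Adj i j) (x : ArtinMonoid Γ) :
    gen i * (gen j * x) = gen j * (gen i * x) :=
  (commute_gen h).left_comm x

theorem gen_mul_gen_mul_gen_mul (h : Γ.Adj i j) (x : ArtinMonoid Γ) :
    gen i * (gen j * (gen i * x)) = gen j * (gen i * (gen j * x)) := by
  simpa only [mul_assoc] using congrArg (· * x) (gen_braid h)

section lift

variable {M : Type*} [Monoid M] (f : ι → M) (hcomm : ∀ i j, ¬ Γ.Adj i j → Commute (f i) (f j))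
  (hbraid : ∀ i j, Γ.Adj i j → f i * f j * f i = f j * f i * f j)

/-- The universal property of Artin monoids. -/
def lift : ArtinMonoid Γ →* M :=
  PresentedMonoid.lift f <| by
    rintro a b (⟨i, j, h, rfl, rfl⟩ | ⟨i, j, h, rfl, rfl⟩)
    · simpa using (hcomm i j h).eq
    · simpa using hbraid i j h

@[simp]
theorem lift_gen (i : ι) : lift f hcomm hbraid (gen i) = f i := rfl

end lift

/-- The word length of an element, well defined because the relations are homogeneous. -/
def length (x : ArtinMonoid Γ) : ℕ :=
  (lift (fun _ => Multiplicative.ofAdd 1) (fun _ _ _ => Commute.refl _) (fun _ _ _ => rfl) x).toAdd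

@[simp]
theorem length_gen_mul (i : ι) (x : ArtinMonoid Γ) : length (gen i * x) = length x + 1 := by
  rw [length, map_mul, lift_gen, toAdd_mul, toAdd_ofAdd, add_comm, length]

theorem length_mk (w : FreeMonoid ι) : length (PresentedMonoid.mk (artinRels Γ) w) = w.length := by
  induction w using FreeMonoid.inductionOn' with
  | one => rfl
  | of_mul i w ih =>
    rw [map_mul, FreeMonoid.length_mul, FreeMonoid.length_of, add_comm, ← ih]
    exact length_gen_mul i _

/-! ### Garside's lemma -/

open Classical in
/-- The right complement of `gen i` in the least common right multiple of `gen i` and `gen k`. -/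
noncomputable def complement (i k : ι) : ArtinMonoid Γ :=
  if i = k then 1 else if Γ.Adj i k then gen k * gen i else gen k

/-- The relation that `gen i * x` and `gen k * y` are the same multiple of the least common
multiple of `gen i` and `gen k`. -/
def FactorThroughLcm (i : ι) (x : ArtinMonoid Γ) (k : ι) (y : ArtinMonoid Γ) : Prop :=
  ∃ z, x = complement i k * z ∧ y = complement k i * z

section FactorThroughLcm

variable {x y : ArtinMonoid Γ}

theorem factorThroughLcm_self : FactorThroughLcm i x i y ↔ x = y := by
  simp only [FactorThroughLcm, complement, if_true, one_mul]
  exact ⟨fun ⟨_, hx, hy⟩ => hx.trans hy.symm, fun h => ⟨y, h, rfl⟩⟩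

theorem factorThroughLcm_of_not_adj (hne : i ≠ k) (h : ¬ Γ.Adj i k) :
    FactorThroughLcm i x k y ↔ ∃ z, x = gen k * z ∧ y = gen i * z := by
  simp only [FactorThroughLcm, complement, if_neg hne, if_neg hne.symm, if_neg h,
    if_neg (mt SimpleGraph.Adj.symm h)]

theorem factorThroughLcm_of_adj (h : Γ.Adj i k) :
    FactorThroughLcm i x k y ↔ ∃ z, x = gen k * (gen i * z) ∧ y = gen i * (gen k * z) := by
  simp only [FactorThroughLcm, complement, if_neg h.ne, if_neg h.ne', if_pos h, if_pos h.symm,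
    mul_assoc]

namespace FactorThroughLcm

theorem symm (h : FactorThroughLcm i x k y) : FactorThroughLcm k y i x := by
  obtain ⟨z, hx, hy⟩ := h
  exact ⟨z, hy, hx⟩

theorem mul_right (h : FactorThroughLcm i x k y) (w : ArtinMonoid Γ) :
    FactorThroughLcm i (x * w) k (y * w) := by
  obtain ⟨z, rfl, rfl⟩ := h
  exact ⟨z * w, mul_assoc _ _ _, mul_assoc _ _ _⟩

end FactorThroughLcm

end FactorThroughLcm

variable (Γ) in
/-- Garside's lemma for cofactors of length less than `n`, the induction hypothesis in its proof. -/
def GarsideBelow (n : ℕ) : Prop :=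
  ∀ (i k : ι) (x y : ArtinMonoid Γ), length x < n → gen i * x = gen k * y →
    FactorThroughLcm i x k y

namespace GarsideBelow

variable {n : ℕ} {x y v z z' : ArtinMonoid Γ}

theorem cancel (hn : GarsideBelow Γ n) (hl : length x < n)
    (h : gen i * x = gen i * y) : x = y :=
  factorThroughLcm_self.1 (hn i i x y hl h)

theorem of_not_adj (hn : GarsideBelow Γ n) (hne : i ≠ k) (hik : ¬ Γ.Adj i k) (hl : length x < n)
    (h : gen i * x = gen k * y) : ∃ z, x = gen k * z ∧ y = gen i * z :=
  (factorThroughLcm_of_not_adj hne hik).1 (hn i k x y hl h)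

theorem of_adj (hn : GarsideBelow Γ n) (hik : Γ.Adj i k) (hl : length x < n)
    (h : gen i * x = gen k * y) : ∃ z, x = gen k * (gen i * z) ∧ y = gen i * (gen k * z) :=
  (factorThroughLcm_of_adj hik).1 (hn i k x y hl h)

theorem complement_cancel (hn : GarsideBelow Γ n) (hl : length (complement p i * z) ≤ n)
    (h : complement p i * z = complement p i * z') : z = z' := by
  by_cases hpi : p = i
  · simpa [complement, hpi] using h
  by_cases hadj : Γ.Adj p i
  · simp only [complement, if_neg hpi, if_pos hadj, mul_assoc, length_gen_mul] at h hl
    exact hn.cancel (by omega) (hn.cancel (by rw [length_gen_mul]; omega) h)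
  · simp only [complement, if_neg hpi, if_neg hadj, length_gen_mul] at h hl
    exact hn.cancel (by omega) h

theorem trans_of_not_adj_of_not_adj (hn : GarsideBelow Γ n) (hl : length v ≤ n)
    (hip : i ≠ p) (hpk : p ≠ k) (hik : i ≠ k) (h₁ : ¬ Γ.Adj i p) (h₂ : ¬ Γ.Adj p k)
    (hx : FactorThroughLcm i x p v) (hy : FactorThroughLcm p v k y) :
    FactorThroughLcm i x k y := by
  obtain ⟨z, rfl, rfl⟩ := (factorThroughLcm_of_not_adj hip h₁).1 hx
  obtain ⟨z', hv, rfl⟩ := (factorThroughLcm_of_not_adj hpk h₂).1 hy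
  rw [length_gen_mul] at hl
  have h₁' := mt SimpleGraph.Adj.symm h₁
  by_cases h : Γ.Adj i k
  · obtain ⟨w, rfl, rfl⟩ := hn.of_adj h (by omega) hv
    refine (factorThroughLcm_of_adj h).2 ⟨gen p * w, ?_, ?_⟩
    · rw [gen_mul_gen_mul_comm h₂, gen_mul_gen_mul_comm h₁']
    · rw [gen_mul_gen_mul_comm h₁', gen_mul_gen_mul_comm h₂]
  · obtain ⟨w, rfl, rfl⟩ := hn.of_not_adj hik h (by omega) hv
    exact (factorThroughLcm_of_not_adj hik h).2
      ⟨gen p * w, gen_mul_gen_mul_comm h₂ w, gen_mul_gen_mul_comm h₁' w⟩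

theorem trans_of_not_adj_of_adj (hn : GarsideBelow Γ n) (hl : length v ≤ n)
    (hip : i ≠ p) (hik : i ≠ k) (h₁ : ¬ Γ.Adj i p) (h₂ : Γ.Adj p k)
    (hx : FactorThroughLcm i x p v) (hy : FactorThroughLcm p v k y) :
    FactorThroughLcm i x k y := by
  obtain ⟨z, rfl, rfl⟩ := (factorThroughLcm_of_not_adj hip h₁).1 hx
  obtain ⟨z', hv, rfl⟩ := (factorThroughLcm_of_adj h₂).1 hy
  have hlen := congrArg length hv
  simp only [length_gen_mul] at hl hlen
  have h₁' := mt SimpleGraph.Adj.symm h₁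
  by_cases h : Γ.Adj i k
  · obtain ⟨w, rfl, hw⟩ := hn.of_adj h (by omega) hv
    simp only [length_gen_mul] at hl hlen
    obtain ⟨q, rfl, hq⟩ := hn.of_not_adj hip.symm h₁' (by omega) hw
    obtain ⟨r, rfl, rfl⟩ := hn.of_adj h₂.symm (by omega) hq
    refine (factorThroughLcm_of_adj h).2 ⟨gen p * (gen k * (gen i * r)), ?_, ?_⟩
    · rw [gen_mul_gen_mul_comm h₁, gen_mul_gen_mul_gen_mul h₂,
        gen_mul_gen_mul_gen_mul h.symm r, ← gen_mul_gen_mul_comm h₁]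
    · rw [← gen_mul_gen_mul_gen_mul h, gen_mul_gen_mul_comm h₁', gen_mul_gen_mul_comm h₁ r,
        gen_mul_gen_mul_gen_mul h₂]
  · obtain ⟨w, rfl, hw⟩ := hn.of_not_adj hik h (by omega) hv
    obtain ⟨q, rfl, rfl⟩ := hn.of_not_adj hip.symm h₁' (by omega) hw
    refine (factorThroughLcm_of_not_adj hik h).2 ⟨gen p * (gen k * q), ?_, ?_⟩
    · rw [gen_mul_gen_mul_gen_mul h₂]
    · rw [gen_mul_gen_mul_comm (mt SimpleGraph.Adj.symm h), gen_mul_gen_mul_comm h₁']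

theorem trans_of_adj_of_adj (hn : GarsideBelow Γ n) (hl : length v ≤ n)
    (hik : i ≠ k) (h : ¬ Γ.Adj i k) (h₁ : Γ.Adj i p) (h₂ : Γ.Adj p k)
    (hx : FactorThroughLcm i x p v) (hy : FactorThroughLcm p v k y) :
    FactorThroughLcm i x k y := by
  obtain ⟨z, rfl, rfl⟩ := (factorThroughLcm_of_adj h₁).1 hx
  obtain ⟨z', hv, rfl⟩ := (factorThroughLcm_of_adj h₂).1 hy
  have hlen := congrArg length hv
  simp only [length_gen_mul] at hl hlen
  have h' := mt SimpleGraph.Adj.symm h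
  obtain ⟨w, hz, hz'⟩ := hn.of_not_adj hik h (by rw [length_gen_mul]; omega) hv
  obtain ⟨q, rfl, rfl⟩ := hn.of_adj h₂ (by omega) hz
  obtain ⟨q', rfl, hq'⟩ := hn.of_adj h₁.symm (by omega) hz'
  simp only [length_gen_mul] at hl hlen
  have hq : gen k * q = gen i * q' := hn.cancel (by rw [length_gen_mul]; omega) hq'
  obtain ⟨r, rfl, rfl⟩ := hn.of_not_adj hik.symm h' (by omega) hq
  refine (factorThroughLcm_of_not_adj hik h).2 ⟨gen p * (gen i * (gen k * (gen p * r))), ?_, ?_⟩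
  · rw [gen_mul_gen_mul_comm h, gen_mul_gen_mul_gen_mul h₁, gen_mul_gen_mul_gen_mul h₂,
      gen_mul_gen_mul_comm h']
  · rw [gen_mul_gen_mul_comm h', gen_mul_gen_mul_gen_mul h₂.symm,
      gen_mul_gen_mul_gen_mul h₁.symm]

theorem trans (hΓ : Γ.CliqueFree 3) (hn : GarsideBelow Γ n) (hl : length v ≤ n)
    (hx : FactorThroughLcm i x p v) (hy : FactorThroughLcm p v k y) :
    FactorThroughLcm i x k y := by
  classical
  by_cases hip : i = p
  · subst hip
    rwa [factorThroughLcm_self.1 hx]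
  by_cases hpk : p = k
  · subst hpk
    rwa [← factorThroughLcm_self.1 hy]
  by_cases hik : i = k
  · subst hik
    obtain ⟨z, rfl, rfl⟩ := hx
    obtain ⟨z', hv, rfl⟩ := hy
    rw [factorThroughLcm_self, hn.complement_cancel hl hv]
  by_cases h₁ : Γ.Adj i p <;> by_cases h₂ : Γ.Adj p k
  · have h : ¬ Γ.Adj i k := fun h =>
      hΓ {i, p, k} (SimpleGraph.is3Clique_triple_iff.2 ⟨h₁, h, h₂⟩)
    exact hn.trans_of_adj_of_adj hl hik h h₁ h₂ hx hy
  · exact (hn.trans_of_not_adj_of_adj hl (Ne.symm hpk) (Ne.symm hik) (mt SimpleGraph.Adj.symm h₂)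
      h₁.symm hy.symm hx.symm).symm
  · exact hn.trans_of_not_adj_of_adj hl hip hik h₁ h₂ hx hy
  · exact hn.trans_of_not_adj_of_not_adj hl hip hpk hik h₁ h₂ hx hy

end GarsideBelow

theorem of_mul_eq_of_mul_iff {a b : FreeMonoid ι} :
    FreeMonoid.of i * a = FreeMonoid.of k * b ↔ i = k ∧ a = b :=
  List.cons_eq_cons

theorem length_eq_of_conGen {u v : FreeMonoid ι} (h : conGen (artinRels Γ) u v) :
    u.length = v.length := by
  rw [← length_mk (Γ := Γ), ← length_mk (Γ := Γ), PresentedMonoid.mk_eq_mk_iff.2 h]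

theorem factorThroughLcm_of_artinRels {u v a b : FreeMonoid ι} (h : artinRels Γ u v)
    (hu : u = FreeMonoid.of i * a) (hv : v = FreeMonoid.of k * b) :
    FactorThroughLcm i (PresentedMonoid.mk (artinRels Γ) a) k (PresentedMonoid.mk _ b) := by
  rcases h with ⟨i', k', h, rfl, rfl⟩ | ⟨i', k', h, rfl, rfl⟩
  · obtain ⟨rfl, rfl⟩ := of_mul_eq_of_mul_iff.1 hu
    obtain ⟨rfl, rfl⟩ := of_mul_eq_of_mul_iff.1 hv
    by_cases hne : i' = k'
    · subst hne
      exact factorThroughLcm_self.2 rfl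
    · exact (factorThroughLcm_of_not_adj hne h).2 ⟨1, (mul_one _).symm, (mul_one _).symm⟩
  · rw [mul_assoc] at hu hv
    obtain ⟨rfl, rfl⟩ := of_mul_eq_of_mul_iff.1 hu
    obtain ⟨rfl, rfl⟩ := of_mul_eq_of_mul_iff.1 hv
    exact (factorThroughLcm_of_adj h).2
      ⟨1, by rw [mul_one, map_mul]; rfl, by rw [mul_one, map_mul]; rfl⟩

theorem GarsideBelow.factorThroughLcm_of_conGen (hΓ : Γ.CliqueFree 3) {n : ℕ}
    (hn : GarsideBelow Γ n) {u v : FreeMonoid ι} (huv : conGen (artinRels Γ) u v)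
    (hl : u.length ≤ n + 1) {i k : ι} {a b : FreeMonoid ι} (hu : u = FreeMonoid.of i * a)
    (hv : v = FreeMonoid.of k * b) :
    FactorThroughLcm i (PresentedMonoid.mk (artinRels Γ) a) k (PresentedMonoid.mk _ b) := by
  induction huv generalizing i k a b with
  | of x y h => exact factorThroughLcm_of_artinRels h hu hv
  | refl x =>
    obtain ⟨rfl, rfl⟩ := of_mul_eq_of_mul_iff.1 (hu.symm.trans hv)
    exact factorThroughLcm_self.2 rfl
  | symm h ih => exact (ih (length_eq_of_conGen h ▸ hl) hv hu).symm
  | @trans x y z hxy hyz ih₁ ih₂ =>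
    have hlen := length_eq_of_conGen hxy
    cases y using FreeMonoid.casesOn with
    | one => simp [hu] at hlen
    | of_mul p w =>
      have hw : length (PresentedMonoid.mk (artinRels Γ) w) ≤ n := by
        rw [length_mk]
        rw [hlen, FreeMonoid.length_mul, FreeMonoid.length_of] at hl
        omega
      exact hn.trans hΓ hw (ih₁ hl hu rfl) (ih₂ (hlen ▸ hl) rfl hv)
  | @mul w x y z hwx hyz ih₁ ih₂ =>
    have hlen := length_eq_of_conGen hwx
    rw [FreeMonoid.length_mul] at hl
    cases w using FreeMonoid.casesOn with
    | one =>
      obtain rfl : x = 1 := FreeMonoid.length_eq_zero.1 hlen.symm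
      rw [one_mul] at hu hv
      exact ih₂ (by omega) hu hv
    | of_mul p w =>
      cases x using FreeMonoid.casesOn with
      | one => simp at hlen
      | of_mul q x =>
        rw [mul_assoc] at hu hv
        obtain ⟨rfl, rfl⟩ := of_mul_eq_of_mul_iff.1 hu
        obtain ⟨rfl, rfl⟩ := of_mul_eq_of_mul_iff.1 hv
        rw [map_mul, map_mul, ← PresentedMonoid.mk_eq_mk_iff.2 hyz]
        exact (ih₁ (by omega) rfl rfl).mul_right _

theorem garsideBelow (hΓ : Γ.CliqueFree 3) (n : ℕ) : GarsideBelow Γ n := by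
  induction n with
  | zero => exact fun _ _ _ _ h => absurd h (Nat.not_lt_zero _)
  | succ n ih =>
    intro i k x y
    refine PresentedMonoid.inductionOn₂ x y fun a b hl h => ?_
    rw [length_mk] at hl
    have huv : conGen (artinRels Γ) (FreeMonoid.of i * a) (FreeMonoid.of k * b) :=
      PresentedMonoid.mk_eq_mk_iff.1 (by rw [map_mul, map_mul]; exact h)
    refine ih.factorThroughLcm_of_conGen hΓ huv ?_ rfl rfl
    rw [FreeMonoid.length_mul, FreeMonoid.length_of]
    omega

theorem isLeftRegular (hΓ : Γ.CliqueFree 3) (x : ArtinMonoid Γ) : IsLeftRegular x := by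
  induction x using presentedMonoid_induction with
  | one => exact isRegular_one.left
  | of i => exact fun x y h => (garsideBelow hΓ _).cancel (Nat.lt_succ_self _) h
  | mul x y hx hy => exact hx.mul hy

/-- The anti-automorphism reading words backwards. -/
def reverse : ArtinMonoid Γ →* (ArtinMonoid Γ)ᵐᵒᵖ :=
  lift (fun i => MulOpposite.op (gen i)) (fun _ _ h => (commute_gen h).op)
    fun i j h => by
      simp only [← MulOpposite.op_mul, ← mul_assoc, gen_braid h]

theorem unop_reverse_unop_reverse (x : ArtinMonoid Γ) : (reverse (reverse x).unop).unop = x := by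
  induction x using presentedMonoid_induction with
  | one => simp
  | of i => rfl
  | mul x y hx hy => simp [hx, hy]

theorem isCancelMul (hΓ : Γ.CliqueFree 3) : IsCancelMul (ArtinMonoid Γ) where
  mul_left_cancel x := isLeftRegular hΓ x
  mul_right_cancel z x y h := by
    have hrev : (reverse z).unop * (reverse x).unop = (reverse z).unop * (reverse y).unop := by
      rw [← MulOpposite.unop_mul, ← MulOpposite.unop_mul, ← map_mul, ← map_mul]
      exact congrArg (fun w => (reverse w).unop) h
    rw [← unop_reverse_unop_reverse x, isLeftRegular hΓ _ hrev, unop_reverse_unop_reverse]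

end ArtinMonoid

/-! ### Enveloping groups and Ore's theorem -/

/-- The relations `a * b = ab` of the enveloping group of a monoid. -/
def envelopingRels (M : Type*) [Monoid M] : Set (FreeGroup M) :=
  {r | ∃ a b, r = FreeGroup.of a * FreeGroup.of b * (FreeGroup.of (a * b))⁻¹}

/-- The universal group receiving a homomorphism from the monoid `M`. -/
abbrev EnvelopingGroup (M : Type*) [Monoid M] :=
  PresentedGroup (envelopingRels M)

namespace EnvelopingGroup

variable {M : Type*} [Monoid M]

/-- The universal homomorphism from a monoid to a group. -/
def of : M →* EnvelopingGroup M :=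
  have map_mul (a b : M) : (PresentedGroup.of (a * b) : EnvelopingGroup M) =
      PresentedGroup.of a * PresentedGroup.of b :=
    (PresentedGroup.mk_eq_mk_of_mul_inv_mem (rels := envelopingRels M)
      (x := FreeGroup.of a * FreeGroup.of b) (y := FreeGroup.of (a * b)) ⟨a, b, rfl⟩).symm
  { toFun := PresentedGroup.of
    map_one' := by simpa using map_mul 1 1
    map_mul' := map_mul }

variable {H : Type*} [Group H]

/-- The universal property of the enveloping group. -/
def lift (f : M →* H) : EnvelopingGroup M →* H :=
  PresentedGroup.toGroup (f := f) <| by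
    rintro r ⟨a, b, rfl⟩
    simp

@[simp]
theorem lift_of (f : M →* H) (x : M) : lift f (of x) = f x :=
  PresentedGroup.toGroup.of _

theorem hom_ext {f g : EnvelopingGroup M →* H} (h : f.comp of = g.comp of) : f = g :=
  PresentedGroup.ext fun x => DFunLike.congr_fun h x

end EnvelopingGroup

theorem exists_mul_eq_mul_of_closure_eq_top {M : Type*} [Monoid M] {S : Set M}
    (hS : Submonoid.closure S = ⊤) (h : ∀ s ∈ S, ∀ r, ∃ c e, c * r = e * s) (r t : M) :
    ∃ c e, c * r = e * t := by
  induction t using Submonoid.dense_induction S hS generalizing r with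
  | mem s hs => exact h s hs r
  | one => exact ⟨1, r, by rw [one_mul, mul_one]⟩
  | mul x y hx hy =>
    obtain ⟨c, e, hce⟩ := hy r
    obtain ⟨c', e', hce'⟩ := hx e
    exact ⟨c' * c, e', by rw [mul_assoc, hce, ← mul_assoc, hce', mul_assoc]⟩

theorem exists_injective_hom_group.{u} {M : Type u} [Monoid M] [IsCancelMul M]
    (ore : ∀ r t : M, ∃ c e, c * r = e * t) :
    ∃ (H : Type u) (_ : Group H) (f : M →* H), Function.Injective f := by
  choose c e hce using ore
  let _ : OreLocalization.OreSet (⊤ : Submonoid M) :=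
    { ore_right_cancel := fun _ _ _ h => ⟨1, by rw [mul_right_cancel h]⟩
      oreNum := fun r t => e r t
      oreDenom := fun r t => ⟨c r t, trivial⟩
      ore_eq := fun r t => hce r t }
  have hunit (x : M) : IsUnit (OreLocalization.numeratorHom (S := (⊤ : Submonoid M)) x) :=
    OreLocalization.numerator_isUnit (⟨x, Submonoid.mem_top x⟩ : (⊤ : Submonoid M))
  refine ⟨_, inferInstance, IsUnit.liftRight OreLocalization.numeratorHom hunit, fun x y hxy => ?_⟩
  obtain ⟨u, v, hnum, hden⟩ := OreLocalization.oreDiv_eq_iff.1 (congrArg Units.val hxy)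
  have huv : (u : M) = v := by simpa using hden
  rw [← huv] at hnum
  exact (mul_left_cancel hnum).symm

theorem EnvelopingGroup.of_injective {M : Type*} [Monoid M] [IsCancelMul M]
    (ore : ∀ r t : M, ∃ c e, c * r = e * t) :
    Function.Injective (EnvelopingGroup.of : M →* EnvelopingGroup M) := by
  obtain ⟨H, _, f, hf⟩ := exists_injective_hom_group ore
  refine Function.Injective.of_comp (f := EnvelopingGroup.lift f) ?_
  simpa only [Function.comp_def, EnvelopingGroup.lift_of] using hf

/-! ### Half twists in the infinite braid monoid -/

theorem hasse_nat_adj {i j : ℕ} : (SimpleGraph.hasse ℕ).Adj i j ↔ i + 1 = j ∨ j + 1 = i := by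
  rw [SimpleGraph.hasse_adj, Nat.covBy_iff_add_one_eq, Nat.covBy_iff_add_one_eq]

theorem hasse_nat_cliqueFree : (SimpleGraph.hasse ℕ).CliqueFree 3 := by
  intro s hs
  obtain ⟨i, j, k, hij, hik, hjk, -⟩ := SimpleGraph.is3Clique_iff.1 hs
  rw [hasse_nat_adj] at hij hik hjk
  omega

/-- The positive braid monoid on infinitely many strands. -/
abbrev InfiniteBraidMonoid := ArtinMonoid (SimpleGraph.hasse ℕ)

namespace InfiniteBraidMonoid

open ArtinMonoid Filter

/-- The endomorphism `σ_i ↦ σ_{i+1}` adding a strand on the left. -/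
def shift : InfiniteBraidMonoid →* InfiniteBraidMonoid :=
  lift (fun i => gen (i + 1))
    (fun i j h => commute_gen (by rw [hasse_nat_adj] at h ⊢; omega))
    (fun i j h => gen_braid (by rw [hasse_nat_adj] at h ⊢; omega))

@[simp]
theorem shift_gen (i : ℕ) : shift (gen i) = gen (i + 1) := rfl

/-- The braid `σ_0 σ_1 ⋯ σ_{n-1}`, a Coxeter element on the first `n + 1` strands. -/
def coxeter : ℕ → InfiniteBraidMonoid
  | 0 => 1
  | n + 1 => coxeter n * gen n

theorem coxeter_commute_gen {n i : ℕ} (h : n < i) : Commute (coxeter n) (gen i) := by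
  induction n with
  | zero => exact Commute.one_left _
  | succ n ih =>
    have hni : Commute (gen n : InfiniteBraidMonoid) (gen i) :=
      commute_gen (by rw [hasse_nat_adj]; omega)
    exact (ih (by omega)).mul_left hni

theorem coxeter_semiconjBy_gen {n i : ℕ} (h : i + 1 < n) :
    SemiconjBy (coxeter n) (gen i) (gen (i + 1)) := by
  induction n with
  | zero => omega
  | succ n ih =>
    obtain h' | rfl : i + 1 < n ∨ n = i + 1 := by omega
    · have hni : Commute (gen n : InfiniteBraidMonoid) (gen i) :=
        commute_gen (by rw [hasse_nat_adj]; omega)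
      exact (ih h').mul_left hni
    · calc coxeter i * gen i * gen (i + 1) * gen i
          = coxeter i * (gen i * gen (i + 1) * gen i) := by simp only [mul_assoc]
        _ = coxeter i * (gen (i + 1) * gen i * gen (i + 1)) := by
          rw [gen_braid (hasse_nat_adj.2 (Or.inl rfl))]
        _ = coxeter i * gen (i + 1) * gen i * gen (i + 1) := by simp only [mul_assoc]
        _ = gen (i + 1) * coxeter i * gen i * gen (i + 1) := by
          rw [(coxeter_commute_gen (Nat.lt_succ_self i)).eq]
        _ = gen (i + 1) * (coxeter i * gen i * gen (i + 1)) := by simp only [mul_assoc]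

theorem coxeter_semiconjBy_coxeter {n k : ℕ} (h : k < n) :
    SemiconjBy (coxeter n) (coxeter k) (shift (coxeter k)) := by
  induction k with
  | zero => exact SemiconjBy.one_right _
  | succ k ih =>
    rw [coxeter, map_mul, shift_gen]
    exact (ih (by omega)).mul_right (coxeter_semiconjBy_gen h)

theorem coxeter_succ_eq_gen_zero_mul (n : ℕ) :
    coxeter (n + 1) = gen 0 * shift (coxeter n) := by
  induction n with
  | zero => simp [coxeter]
  | succ n ih =>
    calc coxeter (n + 1) * gen (n + 1) = gen 0 * shift (coxeter n) * gen (n + 1) := by rw [ih]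
      _ = gen 0 * shift (coxeter n * gen n) := by rw [map_mul, shift_gen, mul_assoc]

/-- The half twist `Δ` on the first `n + 1` strands. -/
def halfTwist : ℕ → InfiniteBraidMonoid
  | 0 => 1
  | n + 1 => coxeter (n + 1) * halfTwist n

theorem halfTwist_commute_gen {n i : ℕ} (h : n < i) : Commute (halfTwist n) (gen i) := by
  induction n with
  | zero => exact Commute.one_left _
  | succ n ih => exact (coxeter_commute_gen h).mul_left (ih (by omega))

theorem halfTwist_succ_eq_mul_gen (n : ℕ) :
    halfTwist (n + 1) = shift (coxeter n) * halfTwist n * gen n := by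
  cases n with
  | zero => simp [halfTwist, coxeter]
  | succ k =>
    calc coxeter (k + 2) * (coxeter (k + 1) * halfTwist k)
        = shift (coxeter (k + 1)) * (coxeter (k + 1) * gen (k + 1)) * halfTwist k := by
          rw [← mul_assoc, (coxeter_semiconjBy_coxeter (Nat.lt_succ_self (k + 1))).eq]
          rfl
      _ = shift (coxeter (k + 1)) * (coxeter (k + 1) * (halfTwist k * gen (k + 1))) := by
          rw [(halfTwist_commute_gen (Nat.lt_succ_self k)).eq]
          simp only [mul_assoc]
      _ = shift (coxeter (k + 1)) * halfTwist (k + 1) * gen (k + 1) := by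
          simp only [halfTwist, mul_assoc]

theorem halfTwist_semiconjBy_gen {n i j : ℕ} (h : i + j + 1 = n) :
    SemiconjBy (halfTwist n) (gen i) (gen j) := by
  induction n generalizing j with
  | zero => omega
  | succ n ih =>
    cases j with
    | zero =>
      obtain rfl : i = n := by omega
      calc coxeter (i + 1) * halfTwist i * gen i
          = gen 0 * (shift (coxeter i) * halfTwist i * gen i) := by
            rw [coxeter_succ_eq_gen_zero_mul]
            simp only [mul_assoc]
        _ = gen 0 * halfTwist (i + 1) := by rw [halfTwist_succ_eq_mul_gen]
    | succ j => exact (coxeter_semiconjBy_gen (by omega)).mul_left (ih (by omega))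

theorem exists_halfTwist_eq_mul_gen {n i : ℕ} (h : i < n) : ∃ v, halfTwist n = v * gen i := by
  induction n with
  | zero => omega
  | succ n ih =>
    obtain h' | rfl : i < n ∨ i = n := by omega
    · obtain ⟨v, hv⟩ := ih h'
      exact ⟨coxeter (n + 1) * v, by rw [halfTwist, hv, mul_assoc]⟩
    · exact ⟨_, halfTwist_succ_eq_mul_gen i⟩

theorem eventually_exists_halfTwist_semiconjBy (x : InfiniteBraidMonoid) :
    ∀ᶠ n in atTop, ∃ y, SemiconjBy (halfTwist n) x y := by
  induction x using presentedMonoid_induction with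
  | one => exact Eventually.of_forall fun n => ⟨1, SemiconjBy.one_right _⟩
  | of i =>
    filter_upwards [eventually_gt_atTop i] with n hn
    exact ⟨gen (n - 1 - i), halfTwist_semiconjBy_gen (by omega)⟩
  | mul x x' hx hx' =>
    filter_upwards [hx, hx'] with n ⟨y, hy⟩ ⟨y', hy'⟩
    exact ⟨y * y', hy.mul_right hy'⟩

theorem exists_mul_eq_mul (r t : InfiniteBraidMonoid) : ∃ c e, c * r = e * t := by
  refine exists_mul_eq_mul_of_closure_eq_top (PresentedMonoid.closure_range_of _) ?_ r t
  rintro _ ⟨i, rfl⟩ r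
  obtain ⟨n, ⟨y, hy⟩, hin⟩ :=
    ((eventually_exists_halfTwist_semiconjBy r).and (eventually_gt_atTop i)).exists
  obtain ⟨v, hv⟩ := exists_halfTwist_eq_mul_gen hin
  exact ⟨halfTwist n, y * v, by rw [hy.eq, hv, mul_assoc]; rfl⟩

theorem of_injective :
    Function.Injective (EnvelopingGroup.of : InfiniteBraidMonoid →* EnvelopingGroup _) :=
  have := isCancelMul hasse_nat_cliqueFree
  EnvelopingGroup.of_injective exists_mul_eq_mul

end InfiniteBraidMonoid

/-! ### The embedding of the finite braid monoids -/

section FiniteBraidMonoid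

open ArtinMonoid

variable {m : ℕ} {i j : Fin m}

theorem braidMonoid_commute_of (h : ¬ (SimpleGraph.hasse ℕ).Adj i j) :
    Commute (PresentedMonoid.of (braidRels m) i) (PresentedMonoid.of (braidRels m) j) := by
  have of_le {i j : Fin m} (h : (i : ℕ) + 2 ≤ j) :
      Commute (PresentedMonoid.of (braidRels m) i) (PresentedMonoid.of (braidRels m) j) :=
    PresentedMonoid.mk_eq_mk_of_rel (rels := braidRels m)
      (x := FreeMonoid.of i * FreeMonoid.of j) (y := FreeMonoid.of j * FreeMonoid.of i)
      (Or.inl ⟨i, j, h, rfl, rfl⟩)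
  rw [hasse_nat_adj] at h
  obtain hij | hij | hij : i = j ∨ (i : ℕ) + 2 ≤ j ∨ (j : ℕ) + 2 ≤ i := by omega
  · exact hij ▸ Commute.refl _
  · exact of_le hij
  · exact (of_le hij).symm

theorem braidMonoid_of_braid (h : (SimpleGraph.hasse ℕ).Adj i j) :
    PresentedMonoid.of (braidRels m) i * PresentedMonoid.of (braidRels m) j *
        PresentedMonoid.of (braidRels m) i =
      PresentedMonoid.of (braidRels m) j * PresentedMonoid.of (braidRels m) i *
        PresentedMonoid.of (braidRels m) j := by
  have of_succ {i j : Fin m} (h : (i : ℕ) + 1 = j) :=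
    PresentedMonoid.mk_eq_mk_of_rel (rels := braidRels m)
      (x := FreeMonoid.of i * FreeMonoid.of j * FreeMonoid.of i)
      (y := FreeMonoid.of j * FreeMonoid.of i * FreeMonoid.of j)
      (Or.inr ⟨i, j, h, rfl, rfl⟩)
  rcases hasse_nat_adj.1 h with h | h
  · exact of_succ h
  · exact (of_succ h).symm

variable (m)

/-- The embedding `σ_i ↦ σ_{m-1-i}` of `B_{m+1}^+` in the infinite braid monoid. The indices are
reversed because the last entry of a tuple is the one that is not shifted in `shiftedProd`. -/
def braidEmbedding : PresentedMonoid (braidRels m) →* InfiniteBraidMonoid :=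
  PresentedMonoid.lift (fun i => gen (i.rev : ℕ)) <| by
    rintro a b (⟨i, j, h, rfl, rfl⟩ | ⟨i, j, h, rfl, rfl⟩)
    · have hij : ¬ (SimpleGraph.hasse ℕ).Adj i.rev j.rev := by
        rw [hasse_nat_adj, Fin.val_rev, Fin.val_rev]
        omega
      simpa using (commute_gen hij).eq
    · have hij : (SimpleGraph.hasse ℕ).Adj i.rev j.rev := by
        rw [hasse_nat_adj, Fin.val_rev, Fin.val_rev]
        omega
      simpa using gen_braid hij

@[simp]
theorem braidEmbedding_of (i : Fin m) :
    braidEmbedding m (PresentedMonoid.of _ i) = gen (i.rev : ℕ) := rfl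

/-- The retraction of `braidEmbedding m` sending the remaining generators to an adjoined zero. -/
def braidRetraction : InfiniteBraidMonoid →* WithZero (PresentedMonoid (braidRels m)) :=
  lift (fun i => if h : i < m then ↑(PresentedMonoid.of (braidRels m) (Fin.rev ⟨i, h⟩)) else 0)
    (fun i j h => by
      by_cases hij : i < m ∧ j < m
      · have hrev : ¬ (SimpleGraph.hasse ℕ).Adj (Fin.rev ⟨i, hij.1⟩) (Fin.rev ⟨j, hij.2⟩) := by
          rw [hasse_nat_adj] at h ⊢
          simp only [Fin.val_rev]
          omega
        simp only [hij, dite_true, Commute, SemiconjBy, ← WithZero.coe_mul,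
          (braidMonoid_commute_of hrev).eq]
      · rcases not_and_or.1 hij with hi | hj
        · simp [hi]
        · simp [hj])
    (fun i j h => by
      by_cases hij : i < m ∧ j < m
      · have hrev : (SimpleGraph.hasse ℕ).Adj (Fin.rev ⟨i, hij.1⟩) (Fin.rev ⟨j, hij.2⟩) := by
          rw [hasse_nat_adj] at h ⊢
          simp only [Fin.val_rev]
          omega
        simp only [hij, dite_true, ← WithZero.coe_mul, braidMonoid_of_braid hrev]
      · rcases not_and_or.1 hij with hi | hj
        · simp [hi]
        · simp [hj])

theorem braidRetraction_comp_braidEmbedding :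
    (braidRetraction m).comp (braidEmbedding m) = WithZero.coeMonoidHom := by
  refine PresentedMonoid.ext _ fun i => ?_
  rw [MonoidHom.comp_apply, braidEmbedding_of, braidRetraction, lift_gen, dif_pos i.rev.isLt,
    Fin.eta, Fin.rev_rev]
  rfl

theorem braidEmbedding_injective : Function.Injective (braidEmbedding m) := by
  refine Function.Injective.of_comp (f := braidRetraction m) ?_
  rw [← MonoidHom.coe_comp, braidRetraction_comp_braidEmbedding]
  exact WithZero.coe_injective

end FiniteBraidMonoid

/-! ### Shelves and the braid action -/

/-- Right self-distributivity, the axiom of a shelf. -/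
def SelfDistributive {S : Type*} (op : S → S → S) : Prop :=
  ∀ a b c, op (op a b) c = op (op a c) (op b c)

namespace FreeShelf

variable {α S : Type*}

theorem selfDistributive_mul : SelfDistributive (fun x y : FreeShelf α => x * y) := by
  intro a b c
  induction a using Con.induction_on with | _ a
  induction b using Con.induction_on with | _ b
  induction c using Con.induction_on with | _ c
  exact (Con.eq _).2 (ConGen.Rel.of _ _ ⟨a, b, c, rfl, rfl⟩)

/-- The universal property of the free shelf. -/
def lift {op : S → S → S} (hop : SelfDistributive op) (f : α → S) (x : FreeShelf α) : S :=
  let _ : Mul S := ⟨op⟩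
  have hker : conGen (sdRel α) ≤ Con.ker (FreeMagma.lift f) := Con.conGen_le.2 <| by
    rintro _ _ ⟨t, u, v, rfl, rfl⟩
    exact hop (FreeMagma.lift f t) (FreeMagma.lift f u) (FreeMagma.lift f v)
  Con.liftOn x (FreeMagma.lift f) fun _ _ h => hker h

theorem lift_mul {op : S → S → S} (hop : SelfDistributive op) (f : α → S) (x y : FreeShelf α) :
    lift hop f (x * y) = op (lift hop f x) (lift hop f y) := by
  induction x, y using Con.induction_on₂ with | _ x y
  rfl

end FreeShelf

section BraidMap

variable {S T : Type*} {op : S → S → S} {op' : T → T → T} {m : ℕ}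

theorem braidMap_comm {i j : Fin m} (h : (i : ℕ) + 2 ≤ j) (a : Fin (m + 1) → S) :
    braidMap op i (braidMap op j a) = braidMap op j (braidMap op i a) := by
  funext k
  simp only [braidMap, Function.update_apply, Fin.ext_iff, Fin.val_succ, Fin.val_castSucc]
  split_ifs <;> first | rfl | omega

theorem braidMap_braid (hop : SelfDistributive op) {i j : Fin m} (h : (i : ℕ) + 1 = j)
    (a : Fin (m + 1) → S) :
    braidMap op i (braidMap op j (braidMap op i a)) =
      braidMap op j (braidMap op i (braidMap op j a)) := by
  have hj : j.castSucc = i.succ := Fin.ext h.symm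
  funext k
  simp only [braidMap, hj, Function.update_apply, Fin.ext_iff, Fin.val_succ, Fin.val_castSucc]
  split_ifs <;> first | rfl | omega | exact hop _ _ _

theorem comp_braidMap {φ : S → T} (hφ : ∀ x y, φ (op x y) = op' (φ x) (φ y)) (i : Fin m)
    (a : Fin (m + 1) → S) : φ ∘ braidMap op i a = braidMap op' i (φ ∘ a) := by
  simp only [braidMap, Function.comp_update, hφ, Function.comp_apply]

theorem init_braidMap_castSucc (i : Fin m) (a : Fin (m + 2) → S) :
    Fin.init (braidMap op i.castSucc a) = braidMap op i (Fin.init a) := by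
  funext j
  simp [Fin.init, braidMap, Function.update_apply, Fin.ext_iff]

theorem braidMap_castSucc_last (i : Fin m) (a : Fin (m + 2) → S) :
    braidMap op i.castSucc a (Fin.last (m + 1)) = a (Fin.last (m + 1)) := by
  have := i.isLt
  simp only [braidMap, Function.update_apply, Fin.ext_iff, Fin.val_succ, Fin.val_castSucc,
    Fin.val_last]
  rw [if_neg (by omega), if_neg (by omega)]

theorem init_init_braidMap_last (a : Fin (m + 2) → S) :
    Fin.init (Fin.init (braidMap op (Fin.last m) a)) = Fin.init (Fin.init a) := by
  funext j
  have := j.isLt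
  simp only [Fin.init, braidMap, Function.update_apply, Fin.ext_iff, Fin.val_succ,
    Fin.val_castSucc, Fin.val_last]
  rw [if_neg (by omega), if_neg (by omega)]

/-- The action of `B_{m+1}^+` on `(m+1)`-tuples of elements of a shelf. -/
def braidAction (hop : SelfDistributive op) (m : ℕ) :
    PresentedMonoid (braidRels m) →* Function.End (Fin (m + 1) → S) :=
  PresentedMonoid.lift (M := Function.End (Fin (m + 1) → S)) (fun i => braidMap op i) <| by
    rintro a b (⟨i, j, h, rfl, rfl⟩ | ⟨i, j, h, rfl, rfl⟩)
    · exact funext fun a => braidMap_comm h a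
    · exact funext fun a => braidMap_braid hop h a

theorem braidAction_of (hop : SelfDistributive op) (i : Fin m) :
    braidAction hop m (PresentedMonoid.of _ i) = braidMap op i := rfl

theorem comp_braidAction (hop : SelfDistributive op) (hop' : SelfDistributive op') {φ : S → T}
    (hφ : ∀ x y, φ (op x y) = op' (φ x) (φ y)) (x : PresentedMonoid (braidRels m))
    (a : Fin (m + 1) → S) : φ ∘ braidAction hop m x a = braidAction hop' m x (φ ∘ a) := by
  induction x using presentedMonoid_induction generalizing a with
  | one => rw [map_one, map_one]; rfl
  | of i => exact comp_braidMap hφ i a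
  | mul x y hx hy =>
    rw [map_mul, map_mul]
    exact (hx _).trans (congrArg _ (hy a))

end BraidMap

/-! ### Shifted conjugacy -/

section ShiftedConj

variable {G : Type*} [Group G] (sh : G →* G) (g : G)

/-- Dehornoy's shifted conjugacy operation `a ▷ b = (sh b)⁻¹ g (sh a) b`. -/
def shiftedConj (a b : G) : G := (sh b)⁻¹ * g * sh a * b

/-- The product `⋯ sh (sh a_{n-3}) * sh a_{n-2} * a_{n-1}` encoding a tuple as one group element. -/
def shiftedProd : (n : ℕ) → (Fin n → G) → G
  | 0, _ => 1
  | n + 1, a => sh (shiftedProd n (Fin.init a)) * a (Fin.last n)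

variable {sh g}

theorem selfDistributive_shiftedConj (hcomm : ∀ x, Commute g (sh (sh x)))
    (hbraid : g * sh g * g = sh g * g * sh g) :
    SelfDistributive (shiftedConj sh g) := by
  intro a b c
  have ha : sh (sh a) * g = g * sh (sh a) := (hcomm a).eq.symm
  have hb : (sh (sh b))⁻¹ * g = g * (sh (sh b))⁻¹ := (hcomm b).inv_right.eq.symm
  have hc : sh (sh c) * g = g * sh (sh c) := (hcomm c).eq.symm
  have hg : (sh g)⁻¹ * g * sh g * g = g * sh g := by
    rw [mul_assoc, mul_assoc, inv_mul_eq_iff_eq_mul, ← mul_assoc, hbraid, mul_assoc]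
  simp only [shiftedConj, map_mul, map_inv]
  symm
  calc _ = (sh c)⁻¹ * (sh (sh b))⁻¹ * (sh g)⁻¹ * (sh (sh c) * g) * (sh (sh c))⁻¹ * sh g
            * (sh (sh a) * g) * sh b * c := by group
    _ = (sh c)⁻¹ * (sh (sh b))⁻¹ * ((sh g)⁻¹ * g * sh g * g) * sh (sh a) * sh b * c := by
      rw [hc, ha]; group
    _ = (sh c)⁻¹ * ((sh (sh b))⁻¹ * g) * sh g * sh (sh a) * sh b * c := by rw [hg]; group
    _ = _ := by rw [hb]; group

theorem shiftedProd_braidMap (hcomm : ∀ x, Commute g (sh (sh x))) {m : ℕ} (i : Fin m)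
    (a : Fin (m + 1) → G) :
    shiftedProd sh (m + 1) (braidMap (shiftedConj sh g) i a) =
      sh^[i.rev] g * shiftedProd sh (m + 1) a := by
  induction m with
  | zero => exact i.elim0
  | succ m ih =>
    induction i using Fin.lastCases with
    | last =>
      set y := shiftedProd sh m (Fin.init (Fin.init a))
      set b := a (Fin.last m).castSucc
      set c := a (Fin.last (m + 1))
      have hlast : braidMap (shiftedConj sh g) (Fin.last m) a (Fin.last (m + 1)) =
          shiftedConj sh g b c := by
        simp [braidMap, b, c]
      have hinit : Fin.init (braidMap (shiftedConj sh g) (Fin.last m) a) (Fin.last m) = c := by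
        simp [Fin.init, braidMap, c]
      calc shiftedProd sh (m + 2) (braidMap (shiftedConj sh g) (Fin.last m) a)
          = sh (sh y * c) * shiftedConj sh g b c := by
            rw [shiftedProd, shiftedProd, init_init_braidMap_last, hlast, hinit]
        _ = sh (sh y) * g * (sh b * c) := by
            rw [shiftedConj, map_mul]
            group
        _ = g * (sh (sh y * b) * c) := by
            rw [← (hcomm y).eq, map_mul]
            group
        _ = sh^[(Fin.last m).rev] g * shiftedProd sh (m + 2) a := by
            rw [Fin.rev_last]
            rfl
    | cast i =>
      have hrev : (i.castSucc.rev : ℕ) = i.rev + 1 := by rw [Fin.rev_castSucc, Fin.val_succ]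
      rw [shiftedProd, init_braidMap_castSucc, braidMap_castSucc_last, ih, map_mul, mul_assoc, hrev,
        Function.iterate_succ_apply']
      rfl

theorem shiftedProd_braidAction (hcomm : ∀ x, Commute g (sh (sh x)))
    (hop : SelfDistributive (shiftedConj sh g)) {m : ℕ}
    {ψ : PresentedMonoid (braidRels m) →* G}
    (hψ : ∀ i : Fin m, ψ (PresentedMonoid.of _ i) = sh^[i.rev] g)
    (x : PresentedMonoid (braidRels m)) (a : Fin (m + 1) → G) :
    shiftedProd sh (m + 1) (braidAction hop m x a) = ψ x * shiftedProd sh (m + 1) a := by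
  induction x using presentedMonoid_induction generalizing a with
  | one => rw [map_one, map_one, one_mul]; rfl
  | of i => rw [hψ, braidAction_of, shiftedProd_braidMap hcomm]
  | mul x y hx hy =>
    rw [map_mul, map_mul, mul_assoc, ← hy]
    exact hx _

end ShiftedConj

/-- The braid group on infinitely many strands. -/
abbrev InfiniteBraidGroup := EnvelopingGroup InfiniteBraidMonoid

namespace InfiniteBraidGroup

open ArtinMonoid InfiniteBraidMonoid EnvelopingGroup

/-- The standard generators of the infinite braid group. -/
def σ (i : ℕ) : InfiniteBraidGroup := of (gen i)

/-- The endomorphism `σ_i ↦ σ_{i+1}` of the infinite braid group. -/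
def shift : InfiniteBraidGroup →* InfiniteBraidGroup :=
  EnvelopingGroup.lift (of.comp InfiniteBraidMonoid.shift)

@[simp]
theorem shift_σ (i : ℕ) : shift (σ i) = σ (i + 1) :=
  EnvelopingGroup.lift_of _ _

theorem shift_iterate_σ_zero (i : ℕ) : shift^[i] (σ 0) = σ i := by
  induction i with
  | zero => rfl
  | succ i ih => rw [Function.iterate_succ_apply', ih, shift_σ]

theorem σ_zero_commute_shift_shift (x : InfiniteBraidGroup) :
    Commute (σ 0) (shift (shift x)) := by
  have hconj : (MulAut.conj (σ 0)).toMonoidHom.comp (shift.comp shift) = shift.comp shift := by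
    refine hom_ext (PresentedMonoid.ext _ fun i => ?_)
    have hi : Commute (σ 0) (σ (i + 2)) :=
      (commute_gen (by rw [hasse_nat_adj]; omega)).map of
    change σ 0 * shift (shift (σ i)) * (σ 0)⁻¹ = shift (shift (σ i))
    rw [shift_σ, shift_σ, hi.eq, mul_inv_cancel_right]
  exact mul_inv_eq_iff_eq_mul.1 (DFunLike.congr_fun hconj x)

theorem σ_zero_braid_shift : σ 0 * shift (σ 0) * σ 0 = shift (σ 0) * σ 0 * shift (σ 0) := by
  rw [shift_σ]
  simpa only [σ, map_mul] using congrArg of (gen_braid (hasse_nat_adj.2 (Or.inl (zero_add 1))))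

theorem selfDistributive : SelfDistributive (shiftedConj shift (σ 0)) :=
  selfDistributive_shiftedConj σ_zero_commute_shift_shift σ_zero_braid_shift

theorem eq_of_braidAction_apply_eq {m : ℕ} {x y : PresentedMonoid (braidRels m)}
    {a : Fin (m + 1) → InfiniteBraidGroup}
    (h : braidAction selfDistributive m x a = braidAction selfDistributive m y a) : x = y := by
  let ψ : PresentedMonoid (braidRels m) →* InfiniteBraidGroup := of.comp (braidEmbedding m)
  have hψ (i : Fin m) : ψ (PresentedMonoid.of _ i) = shift^[i.rev] (σ 0) :=
    (shift_iterate_σ_zero _).symm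
  have hprod := congrArg (shiftedProd shift (m + 1)) h
  simp only [shiftedProd_braidAction σ_zero_commute_shift_shift selfDistributive hψ] at hprod
  exact braidEmbedding_injective m (of_injective (mul_right_cancel hprod))

end InfiniteBraidGroup

open FreeShelf in
theorem stmt12_general (m : ℕ) (α : Type*) :
    ∃ ρ : PresentedMonoid (braidRels m) →* Function.End (Fin (m + 1) → FreeShelf α),
      (∀ i : Fin m, ρ (PresentedMonoid.of (braidRels m) i) = braidMap (· * ·) i) ∧
      ∀ x y : PresentedMonoid (braidRels m),
        (∃ a : Fin (m + 1) → FreeShelf α, ρ x a = ρ y a) → x = y := by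
  refine ⟨braidAction selfDistributive_mul m, braidAction_of _, ?_⟩
  rintro x y ⟨a, h⟩
  let φ : FreeShelf α → InfiniteBraidGroup := lift InfiniteBraidGroup.selfDistributive fun _ => 1
  have hφ := comp_braidAction (m := m) (φ := φ) selfDistributive_mul
    InfiniteBraidGroup.selfDistributive (lift_mul _ _)
  exact InfiniteBraidGroup.eq_of_braidAction_apply_eq
    ((hφ x a).symm.trans ((congrArg (φ ∘ ·) h).trans (hφ y a)))

/-- The action of the positive braid monoid `B_{m+1}^+` on `(FS_1)^{m+1}`
given by `ρ(σ_i) = T_i` is free: if `ρ(α)` and `ρ(β)` agree on some tuple, then `α = β`. -/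
theorem stmt12 {m : ℕ} (hm : 1 ≤ m) :
    ∃ ρ : PresentedMonoid (braidRels m) →* Function.End (Fin (m + 1) → FreeShelf Unit),
      (∀ i : Fin m, ρ (PresentedMonoid.of (braidRels m) i) = braidMap (· * ·) i) ∧
      ∀ α β : PresentedMonoid (braidRels m),
        (∃ a : Fin (m + 1) → FreeShelf Unit, ρ α a = ρ β a) → α = β :=
  stmt12_general m Unit
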